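/- arXiv:0811.3447 — 8 statements merged into one kernel-verified Lean document; each statement's English description precedes it below -/
import Mathlib

section
/- Let s₁, s₂ ∈ ℝ. Suppose (u₁,v₁), (u₂,v₂), (u₃,v₃) are three pairwise distinct points of ℝ² each satisfying u_i = s₁ and u_i v_i + v_i³ = s₂, and suppose D_i := u_i + 3v_i² ≠ 0 for each i. Then 1/D₁ + 1/D₂ + 1/D₃ = 0; that is, the signed magnifications of the three images of a source in the three-image region of the generic cusp map sum to zero. -/
/-!
On the line `u = s₁` the cusp map is `v ↦ s₁ v + v³`, so the three images are the roots of the cubic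
`p = X³ + s₁ X - s₂`, and the Jacobian determinant at an image is the value of `p'` there. The
relation is thus an instance of the Euler–Jacobi formula `∑ q(x) / p'(x) = 0` over the roots of a
separable split `p` with `deg q + 2 ≤ deg p`, here with `q = 1`. At a root `x` the derivative is
`p'(x) = a ∏ (x - y)`, with `a` the leading coefficient and `y` ranging over the other roots, so the
sum is `a⁻¹` times the coefficient of degree `deg p - 1` in the Lagrange interpolation of `q`.
-/

section EulerJacobi

open Polynomial Lagrange
open scoped Finset

variable {ι R K : Type*} [CommRing R] [IsDomain R] [Field K] {s : Finset ι}

theorem eq_C_leadingCoeff_mul_nodal {v : ι → R} {p : R[X]} (hv : Set.InjOn v s)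
    (hp : p.degree = #s) (hroot : ∀ i ∈ s, p.IsRoot (v i)) :
    p = C p.leadingCoeff * nodal s v := by
  have hp0 : p ≠ 0 := by
    rintro rfl
    simp at hp
  refine eq_of_degree_le_of_eval_index_eq s hv hp.le ?_ ?_ fun i hi => ?_
  · rw [degree_C_mul (leadingCoeff_ne_zero.mpr hp0), degree_nodal, hp]
  · rw [leadingCoeff_mul, leadingCoeff_C, nodal_monic.leadingCoeff, mul_one]
  · rw [hroot i hi, eval_mul, eval_nodal_at_node hi, mul_zero]

theorem eval_derivative_eq_leadingCoeff_mul_prod_sub [DecidableEq ι] {v : ι → R} {p : R[X]}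
    (hv : Set.InjOn v s) (hp : p.degree = #s) (hroot : ∀ i ∈ s, p.IsRoot (v i)) {i : ι}
    (hi : i ∈ s) :
    p.derivative.eval (v i) = p.leadingCoeff * ∏ j ∈ s.erase i, (v i - v j) := by
  calc p.derivative.eval (v i)
      = (C p.leadingCoeff * nodal s v).derivative.eval (v i) := by
        rw [← eq_C_leadingCoeff_mul_nodal hv hp hroot]
    _ = p.leadingCoeff * ∏ j ∈ s.erase i, (v i - v j) := by
        rw [derivative_C_mul, eval_C_mul, eval_nodal_derivative_eval_node_eq hi, eval_nodal]

theorem sum_eval_div_eval_derivative {v : ι → K} {p q : K[X]} (hv : Set.InjOn v s)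
    (hp : p.degree = #s) (hroot : ∀ i ∈ s, p.IsRoot (v i)) (hq : q.degree < #s) :
    ∑ i ∈ s, q.eval (v i) / p.derivative.eval (v i) = q.coeff (#s - 1) / p.leadingCoeff := by
  classical
  rw [coeff_eq_sum hv hq, Finset.sum_div]
  refine Finset.sum_congr rfl fun i hi => ?_
  rw [eval_derivative_eq_leadingCoeff_mul_prod_sub hv hp hroot hi, div_div, mul_comm]

theorem sum_one_div_eval_derivative_eq_zero {v : ι → K} {p : K[X]} (hv : Set.InjOn v s)
    (hp : p.degree = #s) (hroot : ∀ i ∈ s, p.IsRoot (v i)) (hs : 1 < #s) :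
    ∑ i ∈ s, 1 / p.derivative.eval (v i) = 0 := by
  have hdeg : (1 : K[X]).degree < #s := by
    rw [degree_one]
    exact_mod_cast zero_lt_one.trans hs
  have hcoeff : (1 : K[X]).coeff (#s - 1) = 0 := by
    rw [coeff_one, if_neg (Nat.sub_pos_of_lt hs).ne']
  simpa only [eval_one, hcoeff, zero_div] using sum_eval_div_eval_derivative hv hp hroot hdeg

end EulerJacobi

section Cusp

open Polynomial
open scoped Finset

/-- The polynomial in `v` whose roots are the solutions of `u v + v³ = t`, that is, the second
coordinates of the preimages of `(u, t)` under the cusp map. -/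
noncomputable def cuspPolynomial {R : Type*} [Ring R] (u t : R) : R[X] :=
  X ^ 3 + C u * X - C t

theorem degree_cuspPolynomial {R : Type*} [Ring R] [Nontrivial R] (u t : R) :
    (cuspPolynomial u t).degree = 3 := by
  unfold cuspPolynomial
  compute_degree!

variable {R K : Type*} [CommRing R] [Field K]

theorem isRoot_cuspPolynomial_iff {u t v : R} :
    (cuspPolynomial u t).IsRoot v ↔ u * v + v ^ 3 = t := by
  simp [cuspPolynomial, sub_eq_zero, add_comm]

theorem eval_derivative_cuspPolynomial (u t v : R) :
    (cuspPolynomial u t).derivative.eval v = u + 3 * v ^ 2 := by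
  simp only [cuspPolynomial, derivative_sub, derivative_add, derivative_X_pow, derivative_C_mul,
    derivative_X, derivative_C, eval_sub, eval_add, eval_mul, eval_pow, eval_X, eval_C, eval_one,
    eval_zero, Nat.cast_ofNat]
  ring

theorem sum_one_div_jacobian_cusp_fiber_eq_zero {u t : K} {S : Finset K} (hS : #S = 3)
    (hfiber : ∀ v ∈ S, u * v + v ^ 3 = t) : ∑ v ∈ S, 1 / (u + 3 * v ^ 2) = 0 := by
  have hdeg : (cuspPolynomial u t).degree = #S := by
    rw [degree_cuspPolynomial, hS, Nat.cast_ofNat]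
  have hroot : ∀ v ∈ S, (cuspPolynomial u t).IsRoot v := fun v hv =>
    isRoot_cuspPolynomial_iff.mpr (hfiber v hv)
  simpa only [eval_derivative_cuspPolynomial, id] using
    sum_one_div_eval_derivative_eq_zero (v := id) Function.injective_id.injOn hdeg hroot (by lia)

theorem cusp_generic_magnification_relation_general (s₁ s₂ u₁ v₁ u₂ v₂ u₃ v₃ : K)
    (h12 : (u₁, v₁) ≠ (u₂, v₂)) (h13 : (u₁, v₁) ≠ (u₃, v₃)) (h23 : (u₂, v₂) ≠ (u₃, v₃))
    (h₁a : u₁ = s₁) (h₁b : u₁ * v₁ + v₁ ^ 3 = s₂)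
    (h₂a : u₂ = s₁) (h₂b : u₂ * v₂ + v₂ ^ 3 = s₂)
    (h₃a : u₃ = s₁) (h₃b : u₃ * v₃ + v₃ ^ 3 = s₂) :
    1 / (u₁ + 3 * v₁ ^ 2) + 1 / (u₂ + 3 * v₂ ^ 2) + 1 / (u₃ + 3 * v₃ ^ 2) = 0 := by
  classical
  subst u₁ u₂ u₃
  have hv₁₂ : v₁ ≠ v₂ := fun h => h12 (congrArg _ h)
  have hv₁₃ : v₁ ≠ v₃ := fun h => h13 (congrArg _ h)
  have hv₂₃ : v₂ ≠ v₃ := fun h => h23 (congrArg _ h)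
  have hfiber : ∀ v ∈ ({v₁, v₂, v₃} : Finset K), s₁ * v + v ^ 3 = s₂ := by
    simp [h₁b, h₂b, h₃b]
  have hsum := sum_one_div_jacobian_cusp_fiber_eq_zero
    (Finset.card_eq_three.mpr ⟨v₁, v₂, v₃, hv₁₂, hv₁₃, hv₂₃, rfl⟩) hfiber
  rwa [Finset.sum_insert (by simp [hv₁₂, hv₁₃]), Finset.sum_pair hv₂₃, ← add_assoc] at hsum

end Cusp

/-- Cusp magnification relation: the signed magnifications of the three images of a
source in the three-image region of the generic cusp map `f(u,v) = (u, uv + v³)`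
sum to zero. -/
theorem cusp_generic_magnification_relation
    (s₁ s₂ u₁ v₁ u₂ v₂ u₃ v₃ : ℝ)
    (h12 : (u₁, v₁) ≠ (u₂, v₂)) (h13 : (u₁, v₁) ≠ (u₃, v₃)) (h23 : (u₂, v₂) ≠ (u₃, v₃))
    (h₁a : u₁ = s₁) (h₁b : u₁ * v₁ + v₁ ^ 3 = s₂)
    (h₂a : u₂ = s₁) (h₂b : u₂ * v₂ + v₂ ^ 3 = s₂)
    (h₃a : u₃ = s₁) (h₃b : u₃ * v₃ + v₃ ^ 3 = s₂)
    (hD₁ : u₁ + 3 * v₁ ^ 2 ≠ 0) (hD₂ : u₂ + 3 * v₂ ^ 2 ≠ 0) (hD₃ : u₃ + 3 * v₃ ^ 2 ≠ 0) :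
    1 / (u₁ + 3 * v₁ ^ 2) + 1 / (u₂ + 3 * v₂ ^ 2) + 1 / (u₃ + 3 * v₃ ^ 2) = 0 := by
  exact cusp_generic_magnification_relation_general s₁ s₂ u₁ v₁ u₂ v₂ u₃ v₃ h12 h13 h23
    h₁a h₁b h₂a h₂b h₃a h₃b
end

section
/- Let a₁₁, a₁₂₂, a₂₂₂₂, s₁, s₂ ∈ ℝ with a₁₁ ≠ 0. Suppose (u₁,v₁), (u₂,v₂), (u₃,v₃) are three pairwise distinct points of ℝ² each satisfying a₁₁u_i + (1/2)a₁₂₂v_i² = s₁ and a₁₂₂u_iv_i + (1/6)a₂₂₂₂v_i³ = s₂, and suppose D_i := a₁₁(a₁₂₂u_i + (1/2)a₂₂₂₂v_i²) − a₁₂₂²v_i² ≠ 0 for each i. Then 1/D₁ + 1/D₂ + 1/D₃ = 0; that is, the signed magnifications of the three lensed images of a source in the three-image region of the quantitative cusp lensing map sum to zero. -/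
/-!
Eliminating `u` from `η(u, v) = s` shows that the second coordinates of the images of `s` are roots
of a polynomial `P` of degree at most three depending only on `s`, and the Jacobian determinant at
an image is `P'(v)`. As `P'(v) ≠ 0`, the polynomial `P` is not zero, and as `a₁₁ ≠ 0`, distinct
images have distinct `v`; so `P` is a cubic and the images give all its roots. Euler's formula now
yields `∑ 1 / P'(v) = 0`: up to the leading coefficient of `P`, the sum is the coefficient of
`X ^ 2` in the Lagrange interpolant of the constant `1` at the three roots.
-/

open Polynomial

section Roots

variable {R ι : Type*} [CommRing R] [IsDomain R] {P : R[X]} {s : Finset ι} {v : ι → R}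

theorem degree_eq_card_of_forall_isRoot (hvs : Set.InjOn v s) (hP : P ≠ 0)
    (hdeg : P.degree ≤ s.card) (hroot : ∀ i ∈ s, P.IsRoot (v i)) : P.degree = s.card :=
  hdeg.antisymm <| not_lt.mp fun hlt ↦
    hP (eq_zero_of_degree_lt_of_eval_index_eq_zero s hvs hlt hroot)

theorem eq_C_leadingCoeff_mul_nodal_of_forall_isRoot (hvs : Set.InjOn v s)
    (hdeg : P.degree = s.card) (hroot : ∀ i ∈ s, P.IsRoot (v i)) :
    P = C P.leadingCoeff * Lagrange.nodal s v := by
  have hlc : P.leadingCoeff ≠ 0 :=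
    leadingCoeff_ne_zero.mpr fun h ↦ by simp [h] at hdeg
  refine eq_of_degree_le_of_eval_index_eq s hvs hdeg.le ?_ ?_ fun i hi ↦ ?_
  · rw [degree_C_mul hlc, Lagrange.degree_nodal, hdeg]
  · rw [leadingCoeff_mul, leadingCoeff_C, Lagrange.nodal_monic.leadingCoeff, mul_one]
  · rw [hroot i hi, eval_mul, Lagrange.eval_nodal_at_node hi, mul_zero]

end Roots

section EulerFormula

variable {F ι : Type*} [Field F] {P Q : F[X]} {s : Finset ι} {v : ι → F}

theorem sum_eval_div_eval_derivative_s2 (hvs : Set.InjOn v s) (hdeg : P.degree = s.card)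
    (hroot : ∀ i ∈ s, P.IsRoot (v i)) (hQ : Q.degree < s.card) :
    ∑ i ∈ s, Q.eval (v i) / P.derivative.eval (v i) =
      Q.coeff (s.card - 1) / P.leadingCoeff := by
  classical
  have hderiv (i : ι) (hi : i ∈ s) :
      P.derivative.eval (v i) = (∏ j ∈ s.erase i, (v i - v j)) * P.leadingCoeff := by
    conv_lhs => rw [eq_C_leadingCoeff_mul_nodal_of_forall_isRoot hvs hdeg hroot]
    rw [derivative_C_mul, eval_C_mul, Lagrange.eval_nodal_derivative_eval_node_eq hi,
      Lagrange.eval_nodal, mul_comm]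
  rw [Lagrange.coeff_eq_sum hvs hQ, Finset.sum_div]
  exact Finset.sum_congr rfl fun i hi ↦ by rw [hderiv i hi, div_div]

theorem sum_one_div_eval_derivative_eq_zero_s2 (hvs : Set.InjOn v s) (hdeg : P.degree = s.card)
    (hroot : ∀ i ∈ s, P.IsRoot (v i)) (hs : 2 ≤ s.card) :
    ∑ i ∈ s, 1 / P.derivative.eval (v i) = 0 := by
  have hone : (1 : F[X]).degree < s.card := by
    rw [degree_one]
    exact_mod_cast (by lia : 0 < s.card)
  have hcoeff : (1 : F[X]).coeff (s.card - 1) = 0 := by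
    rw [coeff_one, if_neg (by lia)]
  simpa only [eval_one, hcoeff, zero_div] using sum_eval_div_eval_derivative_s2 hvs hdeg hroot hone

theorem sum_one_div_eval_derivative_eq_zero_of_degree_le_three {x y z : F} (hP : P ≠ 0)
    (hdeg : P.degree ≤ 3) (hxy : x ≠ y) (hxz : x ≠ z) (hyz : y ≠ z)
    (hx : P.IsRoot x) (hy : P.IsRoot y) (hz : P.IsRoot z) :
    1 / P.derivative.eval x + 1 / P.derivative.eval y + 1 / P.derivative.eval z = 0 := by
  classical
  have hcard : ({x, y, z} : Finset F).card = 3 :=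
    Finset.card_triple_eq_three_iff.mpr ⟨hxy, hxz, hyz⟩
  have hinj : Set.InjOn id (({x, y, z} : Finset F) : Set F) := Set.injOn_id _
  have hroot : ∀ w ∈ ({x, y, z} : Finset F), P.IsRoot (id w) := by
    simpa using ⟨hx, hy, hz⟩
  have hdeg' := degree_eq_card_of_forall_isRoot hinj hP (by rwa [hcard]) hroot
  have hsum := sum_one_div_eval_derivative_eq_zero_s2 hinj hdeg' hroot (by lia)
  rwa [Finset.sum_insert (by simp [hxy, hxz]), Finset.sum_pair hyz, ← add_assoc] at hsum

end EulerFormula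

section QuantitativeCusp

variable {K : Type*} [Field K] (a₁₁ a₁₂₂ a₂₂₂₂ : K)

/-- The quantitative cusp lensing map `η` with Taylor coefficients `a₁₁`, `a₁₂₂`, `a₂₂₂₂`, over a
field `K`. A fraction whose denominator vanishes in `K` is zero here. -/
def cuspMap (p : K × K) : K × K :=
  (a₁₁ * p.1 + (1 / 2) * a₁₂₂ * p.2 ^ 2, a₁₂₂ * p.1 * p.2 + (1 / 6) * a₂₂₂₂ * p.2 ^ 3)

/-- The Jacobian determinant of `cuspMap`, the reciprocal of the signed magnification. -/
def cuspJacobian (p : K × K) : K :=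
  a₁₁ * (a₁₂₂ * p.1 + (1 / 2) * a₂₂₂₂ * p.2 ^ 2) - a₁₂₂ ^ 2 * p.2 ^ 2

/-- The polynomial in `v` obtained from `cuspMap a₁₁ a₁₂₂ a₂₂₂₂ (u, v) = s` by multiplying the
second equation by `a₁₁` and eliminating `a₁₁ * u` with the first. It is encoded as a `Cubic`, but
its leading coefficient may vanish. -/
def cuspCubic (s : K × K) : Cubic K :=
  ⟨a₁₁ * a₂₂₂₂ / 6 - a₁₂₂ ^ 2 / 2, 0, a₁₂₂ * s.1, -(a₁₁ * s.2)⟩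

variable {a₁₁ a₁₂₂ a₂₂₂₂} {s p q : K × K}

theorem snd_ne_of_cuspMap_eq (ha : a₁₁ ≠ 0) (hpq : p ≠ q)
    (hp : cuspMap a₁₁ a₁₂₂ a₂₂₂₂ p = s) (hq : cuspMap a₁₁ a₁₂₂ a₂₂₂₂ q = s) : p.2 ≠ q.2 := by
  intro hsnd
  have hfst : a₁₁ * p.1 + (1 / 2) * a₁₂₂ * p.2 ^ 2 = a₁₁ * q.1 + (1 / 2) * a₁₂₂ * q.2 ^ 2 :=
    congrArg Prod.fst (hp.trans hq.symm)
  rw [hsnd, add_left_inj] at hfst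
  exact hpq (Prod.ext (mul_left_cancel₀ ha hfst) hsnd)

theorem isRoot_cuspCubic (hp : cuspMap a₁₁ a₁₂₂ a₂₂₂₂ p = s) :
    (cuspCubic a₁₁ a₁₂₂ a₂₂₂₂ s).toPoly.IsRoot p.2 := by
  subst hp
  simp only [cuspCubic, cuspMap, Cubic.toPoly, IsRoot.def, eval_add, eval_mul, eval_C, eval_pow,
    eval_X]
  ring

theorem eval_derivative_cuspCubic [NeZero (2 : K)] [NeZero (3 : K)]
    (hp : cuspMap a₁₁ a₁₂₂ a₂₂₂₂ p = s) :
    (cuspCubic a₁₁ a₁₂₂ a₂₂₂₂ s).toPoly.derivative.eval p.2 = cuspJacobian a₁₁ a₁₂₂ a₂₂₂₂ p := by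
  subst hp
  have h2 : (2 : K) ≠ 0 := two_ne_zero
  have h3 : (3 : K) ≠ 0 := three_ne_zero
  have h6 : (6 : K) = 2 * 3 := by norm_num
  simp only [cuspCubic, cuspMap, cuspJacobian, Cubic.toPoly, derivative_add, derivative_C_mul,
    derivative_X_pow, derivative_X, derivative_C, eval_add, eval_mul, eval_C, eval_pow, eval_X,
    eval_one, eval_zero, h6]
  field_simp
  ring

theorem cusp_quantitative_magnification_relation_general [NeZero (2 : K)] [NeZero (3 : K)]
    {p₁ p₂ p₃ : K × K} (ha : a₁₁ ≠ 0) (h12 : p₁ ≠ p₂) (h13 : p₁ ≠ p₃) (h23 : p₂ ≠ p₃)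
    (h₁ : cuspMap a₁₁ a₁₂₂ a₂₂₂₂ p₁ = s) (h₂ : cuspMap a₁₁ a₁₂₂ a₂₂₂₂ p₂ = s)
    (h₃ : cuspMap a₁₁ a₁₂₂ a₂₂₂₂ p₃ = s) (hD₁ : cuspJacobian a₁₁ a₁₂₂ a₂₂₂₂ p₁ ≠ 0) :
    1 / cuspJacobian a₁₁ a₁₂₂ a₂₂₂₂ p₁ + 1 / cuspJacobian a₁₁ a₁₂₂ a₂₂₂₂ p₂ +
      1 / cuspJacobian a₁₁ a₁₂₂ a₂₂₂₂ p₃ = 0 := by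
  rw [← eval_derivative_cuspCubic h₁] at hD₁
  have hP : (cuspCubic a₁₁ a₁₂₂ a₂₂₂₂ s).toPoly ≠ 0 := fun h ↦ hD₁ (by simp [h])
  rw [← eval_derivative_cuspCubic h₁, ← eval_derivative_cuspCubic h₂,
    ← eval_derivative_cuspCubic h₃]
  exact sum_one_div_eval_derivative_eq_zero_of_degree_le_three hP degree_cubic_le
    (snd_ne_of_cuspMap_eq ha h12 h₁ h₂) (snd_ne_of_cuspMap_eq ha h13 h₁ h₃)
    (snd_ne_of_cuspMap_eq ha h23 h₂ h₃)
    (isRoot_cuspCubic h₁) (isRoot_cuspCubic h₂) (isRoot_cuspCubic h₃)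

end QuantitativeCusp

/-- Quantitative cusp magnification relation: the signed magnifications of the three
lensed images of a source in the three-image region of the quantitative cusp lensing map
`η(u,v) = (a₁₁u + (1/2)a₁₂₂v², a₁₂₂uv + (1/6)a₂₂₂₂v³)` sum to zero. -/
theorem cusp_quantitative_magnification_relation
    (a₁₁ a₁₂₂ a₂₂₂₂ s₁ s₂ u₁ v₁ u₂ v₂ u₃ v₃ : ℝ)
    (ha : a₁₁ ≠ 0)
    (h12 : (u₁, v₁) ≠ (u₂, v₂)) (h13 : (u₁, v₁) ≠ (u₃, v₃)) (h23 : (u₂, v₂) ≠ (u₃, v₃))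
    (h₁a : a₁₁ * u₁ + (1 / 2) * a₁₂₂ * v₁ ^ 2 = s₁)
    (h₁b : a₁₂₂ * u₁ * v₁ + (1 / 6) * a₂₂₂₂ * v₁ ^ 3 = s₂)
    (h₂a : a₁₁ * u₂ + (1 / 2) * a₁₂₂ * v₂ ^ 2 = s₁)
    (h₂b : a₁₂₂ * u₂ * v₂ + (1 / 6) * a₂₂₂₂ * v₂ ^ 3 = s₂)
    (h₃a : a₁₁ * u₃ + (1 / 2) * a₁₂₂ * v₃ ^ 2 = s₁)
    (h₃b : a₁₂₂ * u₃ * v₃ + (1 / 6) * a₂₂₂₂ * v₃ ^ 3 = s₂)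
    (hD₁ : a₁₁ * (a₁₂₂ * u₁ + (1 / 2) * a₂₂₂₂ * v₁ ^ 2) - a₁₂₂ ^ 2 * v₁ ^ 2 ≠ 0)
    (hD₂ : a₁₁ * (a₁₂₂ * u₂ + (1 / 2) * a₂₂₂₂ * v₂ ^ 2) - a₁₂₂ ^ 2 * v₂ ^ 2 ≠ 0)
    (hD₃ : a₁₁ * (a₁₂₂ * u₃ + (1 / 2) * a₂₂₂₂ * v₃ ^ 2) - a₁₂₂ ^ 2 * v₃ ^ 2 ≠ 0) :
    1 / (a₁₁ * (a₁₂₂ * u₁ + (1 / 2) * a₂₂₂₂ * v₁ ^ 2) - a₁₂₂ ^ 2 * v₁ ^ 2) +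
      1 / (a₁₁ * (a₁₂₂ * u₂ + (1 / 2) * a₂₂₂₂ * v₂ ^ 2) - a₁₂₂ ^ 2 * v₂ ^ 2) +
      1 / (a₁₁ * (a₁₂₂ * u₃ + (1 / 2) * a₂₂₂₂ * v₃ ^ 2) - a₁₂₂ ^ 2 * v₃ ^ 2) = 0 := by
  exact cusp_quantitative_magnification_relation_general (s := (s₁, s₂)) ha h12 h13 h23
    (Prod.ext h₁a h₁b) (Prod.ext h₂a h₂b) (Prod.ext h₃a h₃b) hD₁
end

section
/- Let c, s₁, s₂ ∈ ℝ. Suppose (u₁,v₁), (u₂,v₂), (u₃,v₃), (u₄,v₄) are four pairwise distinct points of ℝ² each satisfying u_i² − v_i² = s₁ and −2u_iv_i + 4cv_i = s₂, and suppose D_i := 8cu_i − 4(u_i² + v_i²) ≠ 0 for each i. Then 1/D₁ + 1/D₂ + 1/D₃ + 1/D₄ = 0; that is, the total signed magnification of a source in the four-image region of the elliptic umbilic lensing map is identically zero. -/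
/-!
The elliptic umbilic map is quadratic, so along the line through two points with the same image its
derivative vanishes at their midpoint: the midpoint of two distinct images of a source is a critical
point. The Jacobian determinant at the midpoint of `p` and `q` is a symmetric bilinear expression
`m(p) G m(q)ᵀ` in the polynomials `m = (1, u, v, u² + v²)`. Hence for four images `p i`, with
Jacobian determinants `J i ≠ 0`, the square matrix `M` with rows `m(p i)` satisfies
`M G Mᵀ = diag J`, which inverts to `G (Mᵀ diag(1 / J) M) = 1`. The last row of `G` is
`(-1, 0, 0, 0)`, so comparing the bottom left entries gives `∑ 1 / J i = 0`.
-/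

open Matrix

theorem mul_mul_diagonal_inv_mul_eq_one_of_mul_mul_eq_diagonal {ι κ K : Type*} [Fintype ι]
    [DecidableEq ι] [Fintype κ] [DecidableEq κ] [DivisionRing K] {M : Matrix ι κ K}
    {G : Matrix κ κ K} {N : Matrix κ ι K} {d : ι → K} (hcard : Fintype.card ι = Fintype.card κ)
    (hd : ∀ i, d i ≠ 0) (h : M * G * N = diagonal d) : G * (N * diagonal d⁻¹ * M) = 1 := by
  have right_inv : M * (G * N * diagonal d⁻¹) = 1 := by
    rw [← Matrix.mul_assoc, ← Matrix.mul_assoc, h, diagonal_mul_diagonal, ← diagonal_one]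
    exact congrArg diagonal (funext fun i ↦ mul_inv_cancel₀ (hd i))
  simpa only [Matrix.mul_assoc] using (mul_eq_one_comm_of_card_eq _ _ _ hcard).mp right_inv

section EllipticUmbilic

variable {R : Type*} [CommRing R]

/-- The elliptic umbilic lensing map `η_c`, over an arbitrary commutative ring. -/
def ellipticUmbilic (c : R) (p : R × R) : R × R :=
  (p.1 ^ 2 - p.2 ^ 2, -2 * p.1 * p.2 + 4 * c * p.2)

/-- The Jacobian determinant of `η_c`; its reciprocal at an image is the signed magnification. -/
def ellipticUmbilicJacobian (c : R) (p : R × R) : R :=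
  8 * c * p.1 - 4 * (p.1 ^ 2 + p.2 ^ 2)

/-- The Bezoutian of `η_c` at `p = (u, v)` and `q = (u', v')`: the determinant of the divided
difference matrix `A = !![u + u', -(v + v'); -(v + v'), 4c - (u + u')]`, for which
`η_c p - η_c q = A (p - q)`. It is the Jacobian determinant at the midpoint of `p` and `q`, written
without division by two so as to make sense in every characteristic. -/
def ellipticUmbilicBezoutian (c : R) (p q : R × R) : R :=
  (p.1 + q.1) * (4 * c - (p.1 + q.1)) - (p.2 + q.2) ^ 2

theorem ellipticUmbilicBezoutian_self (c : R) (p : R × R) :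
    ellipticUmbilicBezoutian c p p = ellipticUmbilicJacobian c p := by
  simp only [ellipticUmbilicBezoutian, ellipticUmbilicJacobian]
  ring

theorem ellipticUmbilicBezoutian_eq_zero [NoZeroDivisors R] {c : R} {p q : R × R} (hne : p ≠ q)
    (h : ellipticUmbilic c p = ellipticUmbilic c q) : ellipticUmbilicBezoutian c p q = 0 := by
  obtain ⟨h₁, h₂⟩ := Prod.ext_iff.mp h
  simp only [ellipticUmbilic] at h₁ h₂
  -- Cramer's rule: the Bezoutian annihilates the kernel vector `p - q` of the matrix `A`.
  have hfst : (p.1 - q.1) * ellipticUmbilicBezoutian c p q = 0 := by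
    unfold ellipticUmbilicBezoutian
    linear_combination (4 * c - (p.1 + q.1)) * h₁ + (p.2 + q.2) * h₂
  have hsnd : (p.2 - q.2) * ellipticUmbilicBezoutian c p q = 0 := by
    unfold ellipticUmbilicBezoutian
    linear_combination (p.2 + q.2) * h₁ + (p.1 + q.1) * h₂
  by_contra hB
  exact hne (Prod.ext (sub_eq_zero.mp ((mul_eq_zero_iff_right hB).mp hfst))
    (sub_eq_zero.mp ((mul_eq_zero_iff_right hB).mp hsnd)))

/-- The values at `p = (u, v)` of the polynomials `1, u, v, u² + v²`, in which the Bezoutian is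
bilinear. -/
def ellipticUmbilicBasis (p : R × R) : Fin 4 → R :=
  ![1, p.1, p.2, p.1 ^ 2 + p.2 ^ 2]

/-- The Gram matrix of the Bezoutian with respect to `ellipticUmbilicBasis`. -/
def ellipticUmbilicGram (c : R) : Matrix (Fin 4) (Fin 4) R :=
  !![0, 4 * c, 0, -1;
     4 * c, -2, 0, 0;
     0, 0, -2, 0;
     -1, 0, 0, 0]

theorem basis_vecMul_gram_dotProduct_basis (c : R) (p q : R × R) :
    ellipticUmbilicBasis p ᵥ* ellipticUmbilicGram c ⬝ᵥ ellipticUmbilicBasis q =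
      ellipticUmbilicBezoutian c p q := by
  simp only [ellipticUmbilicBasis, ellipticUmbilicGram, ellipticUmbilicBezoutian, vecMul,
    dotProduct, Fin.sum_univ_four, of_apply, cons_val', cons_val_fin_one, cons_val_zero,
    cons_val_one, cons_val]
  ring

theorem basis_mul_gram_mul_transpose_eq_diagonal [NoZeroDivisors R] {ι : Type*}
    [DecidableEq ι] {c : R} {s : R × R} {p : ι → R × R} (hp : Function.Injective p)
    (himage : ∀ i, ellipticUmbilic c (p i) = s) :
    (of fun i ↦ ellipticUmbilicBasis (p i)) * ellipticUmbilicGram c *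
        (of fun i ↦ ellipticUmbilicBasis (p i))ᵀ =
      diagonal fun i ↦ ellipticUmbilicJacobian c (p i) := by
  ext i j
  refine (basis_vecMul_gram_dotProduct_basis c (p i) (p j)).trans ?_
  obtain rfl | hij := eq_or_ne i j
  · rw [diagonal_apply_eq, ellipticUmbilicBezoutian_self]
  · rw [diagonal_apply_ne _ hij,
      ellipticUmbilicBezoutian_eq_zero (hp.ne hij) ((himage i).trans (himage j).symm)]

end EllipticUmbilic

theorem elliptic_umbilic_lensing_magnification_relation_general {ι K : Type*} [Fintype ι]
    [Field K] (hι : Fintype.card ι = 4) {c : K} {s : K × K} {p : ι → K × K}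
    (hp : Function.Injective p) (himage : ∀ i, ellipticUmbilic c (p i) = s)
    (hJ : ∀ i, ellipticUmbilicJacobian c (p i) ≠ 0) :
    ∑ i, 1 / ellipticUmbilicJacobian c (p i) = 0 := by
  classical
  have inverse := mul_mul_diagonal_inv_mul_eq_one_of_mul_mul_eq_diagonal (by simpa using hι)
    hJ (basis_mul_gram_mul_transpose_eq_diagonal hp himage)
  have bottom_left_entry : -∑ i, (ellipticUmbilicJacobian c (p i))⁻¹ = 0 := by
    simpa [ellipticUmbilicGram, ellipticUmbilicBasis, mul_apply, Fin.sum_univ_four,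
      diagonal_apply] using congrFun₂ inverse 3 0
  simpa only [one_div, neg_eq_zero] using bottom_left_entry

/-- Elliptic umbilic magnification relation: the total signed magnification of a source
in the four-image region of the elliptic umbilic lensing map
`η_c(u,v) = (u² − v², −2uv + 4cv)` is identically zero. -/
theorem elliptic_umbilic_lensing_magnification_relation
    (c s₁ s₂ u₁ v₁ u₂ v₂ u₃ v₃ u₄ v₄ : ℝ)
    (h12 : (u₁, v₁) ≠ (u₂, v₂)) (h13 : (u₁, v₁) ≠ (u₃, v₃)) (h14 : (u₁, v₁) ≠ (u₄, v₄))
    (h23 : (u₂, v₂) ≠ (u₃, v₃)) (h24 : (u₂, v₂) ≠ (u₄, v₄)) (h34 : (u₃, v₃) ≠ (u₄, v₄))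
    (h₁a : u₁ ^ 2 - v₁ ^ 2 = s₁) (h₁b : -2 * u₁ * v₁ + 4 * c * v₁ = s₂)
    (h₂a : u₂ ^ 2 - v₂ ^ 2 = s₁) (h₂b : -2 * u₂ * v₂ + 4 * c * v₂ = s₂)
    (h₃a : u₃ ^ 2 - v₃ ^ 2 = s₁) (h₃b : -2 * u₃ * v₃ + 4 * c * v₃ = s₂)
    (h₄a : u₄ ^ 2 - v₄ ^ 2 = s₁) (h₄b : -2 * u₄ * v₄ + 4 * c * v₄ = s₂)
    (hD₁ : 8 * c * u₁ - 4 * (u₁ ^ 2 + v₁ ^ 2) ≠ 0)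
    (hD₂ : 8 * c * u₂ - 4 * (u₂ ^ 2 + v₂ ^ 2) ≠ 0)
    (hD₃ : 8 * c * u₃ - 4 * (u₃ ^ 2 + v₃ ^ 2) ≠ 0)
    (hD₄ : 8 * c * u₄ - 4 * (u₄ ^ 2 + v₄ ^ 2) ≠ 0) :
    1 / (8 * c * u₁ - 4 * (u₁ ^ 2 + v₁ ^ 2)) + 1 / (8 * c * u₂ - 4 * (u₂ ^ 2 + v₂ ^ 2)) +
      1 / (8 * c * u₃ - 4 * (u₃ ^ 2 + v₃ ^ 2)) + 1 / (8 * c * u₄ - 4 * (u₄ ^ 2 + v₄ ^ 2)) = 0 := by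
  have hp : Function.Injective ![(u₁, v₁), (u₂, v₂), (u₃, v₃), (u₄, v₄)] :=
    List.nodup_ofFn.mp (by simp [-Prod.mk.injEq, h12, h13, h14, h23, h24, h34])
  have h := elliptic_umbilic_lensing_magnification_relation_general (Fintype.card_fin 4)
    (c := c) (s := (s₁, s₂)) hp
    (fun | 0 => Prod.ext h₁a h₁b | 1 => Prod.ext h₂a h₂b
         | 2 => Prod.ext h₃a h₃b | 3 => Prod.ext h₄a h₄b)
    (fun | 0 => hD₁ | 1 => hD₂ | 2 => hD₃ | 3 => hD₄)
  rwa [Fin.sum_univ_four] at h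
end

section
/- Let c, s₁, s₂ ∈ ℝ. Suppose (u₁,v₁), (u₂,v₂), (u₃,v₃), (u₄,v₄) are four pairwise distinct points of ℝ² each satisfying u_i² + 2cv_i = s₁ and v_i² + 2cu_i = s₂, and suppose D_i := 4(u_iv_i − c²) ≠ 0 for each i. Then 1/D₁ + 1/D₂ + 1/D₃ + 1/D₄ = 0; that is, the total signed magnification of a source in the four-image region of the hyperbolic umbilic lensing map is identically zero. -/
/-!
For solutions `p`, `q` of `η_c = s`, the difference quotients of `η_c` form a `2 × 2` matrix
sending `p - q` to `η_c(p) - η_c(q) = 0`, so its determinant `B(p, q)`, the Bezoutian, vanishes for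
`p ≠ q`, while `B(p, p)` is the Jacobian determinant. Hence with four solutions `pᵢ` the functions
`B(·, pᵢ) / B(pᵢ, pᵢ)`, which lie in the four-dimensional span of `1, u, v, uv`, are the Lagrange
interpolation basis at the `pᵢ`. Interpolating the constant `1` and comparing coefficients of `uv`
gives `0 = ∑ᵢ 1 / B(pᵢ, pᵢ)`.
-/

open Matrix

namespace HyperbolicUmbilic

section CommRing

variable {R : Type*} [CommRing R]

/-- The hyperbolic umbilic lensing map `η_c`, over an arbitrary commutative ring. -/
def lensMap (c : R) (p : R × R) : R × R :=
  (p.1 ^ 2 + 2 * c * p.2, p.2 ^ 2 + 2 * c * p.1)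

/-- The matrix of difference quotients of `lensMap c` between `p` and `q`. On the diagonal `p = q`
it is the Jacobian matrix of `lensMap c`. -/
def differenceMatrix (c : R) (p q : R × R) : Matrix (Fin 2) (Fin 2) R :=
  !![p.1 + q.1, 2 * c; 2 * c, p.2 + q.2]

/-- The Bezoutian of the two components of `lensMap c`: a polynomial in two points whose
restriction to the diagonal is the Jacobian determinant of `lensMap c`. -/
def bezoutian (c : R) (p q : R × R) : R :=
  (differenceMatrix c p q).det

theorem bezoutian_eq (c : R) (p q : R × R) :
    bezoutian c p q = (p.1 + q.1) * (p.2 + q.2) - 4 * c ^ 2 := by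
  rw [bezoutian, differenceMatrix, det_fin_two_of]
  ring

theorem bezoutian_self (c : R) (p : R × R) :
    bezoutian c p p = 4 * (p.1 * p.2 - c ^ 2) := by
  rw [bezoutian_eq]
  ring

theorem differenceMatrix_mulVec (c : R) (p q : R × R) :
    differenceMatrix c p q *ᵥ ![p.1 - q.1, p.2 - q.2] =
      ![(lensMap c p).1 - (lensMap c q).1, (lensMap c p).2 - (lensMap c q).2] := by
  ext i
  fin_cases i <;> simp [differenceMatrix, lensMap, mulVec, dotProduct] <;> ring

theorem bezoutian_eq_zero [IsDomain R] {c : R} {p q : R × R} (hpq : p ≠ q)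
    (h : lensMap c p = lensMap c q) : bezoutian c p q = 0 := by
  refine exists_mulVec_eq_zero_iff.mp ⟨![p.1 - q.1, p.2 - q.2], fun h0 ↦ hpq ?_, ?_⟩
  · exact Prod.ext (sub_eq_zero.mp (congrFun h0 0)) (sub_eq_zero.mp (congrFun h0 1))
  · rw [differenceMatrix_mulVec, h]
    simp

variable {ι : Type*}

/-- The matrix evaluating the monomials `1, u, v, uv` (columns) at the points `p i` (rows). -/
def evalMatrix (p : ι → R × R) : Matrix ι (Fin 4) R :=
  of fun i ↦ ![1, (p i).1, (p i).2, (p i).1 * (p i).2]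

/-- The matrix whose `i`-th column lists the coefficients of `bezoutian c · (p i)` in the monomials
`1, u, v, uv`. -/
def bezoutianCoeffs (c : R) (p : ι → R × R) : Matrix (Fin 4) ι R :=
  (of fun i ↦ ![(p i).1 * (p i).2 - 4 * c ^ 2, (p i).2, (p i).1, 1])ᵀ

theorem evalMatrix_mul_bezoutianCoeffs (c : R) (p : ι → R × R) :
    evalMatrix p * bezoutianCoeffs c p = of fun i j ↦ bezoutian c (p i) (p j) := by
  ext i j
  simp only [mul_apply, Fin.sum_univ_four, evalMatrix, bezoutianCoeffs, transpose_apply, of_apply,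
    cons_val, bezoutian_eq]
  ring

theorem evalMatrix_mul_bezoutianCoeffs_eq_diagonal [IsDomain R] [DecidableEq ι] {c : R} {s : R × R}
    {p : ι → R × R} (hp : p.Injective) (hs : ∀ i, lensMap c (p i) = s) :
    evalMatrix p * bezoutianCoeffs c p = diagonal fun i ↦ bezoutian c (p i) (p i) := by
  rw [evalMatrix_mul_bezoutianCoeffs]
  ext i j
  obtain rfl | hij := eq_or_ne i j
  · simp
  · simpa [hij] using bezoutian_eq_zero (hp.ne hij) ((hs i).trans (hs j).symm)

end CommRing

theorem bezoutianCoeffs_mul_diagonal_mul_evalMatrix {K ι : Type*} [Field K] [Fintype ι]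
    [DecidableEq ι] (hι : Fintype.card ι = 4) {c : K} {s : K × K} {p : ι → K × K}
    (hp : p.Injective) (hs : ∀ i, lensMap c (p i) = s) (hB : ∀ i, bezoutian c (p i) (p i) ≠ 0) :
    bezoutianCoeffs c p * diagonal (fun i ↦ (bezoutian c (p i) (p i))⁻¹) * evalMatrix p = 1 := by
  rw [mul_eq_one_comm_of_card_eq _ _ _ (by simp [hι]), ← Matrix.mul_assoc,
    evalMatrix_mul_bezoutianCoeffs_eq_diagonal hp hs, diagonal_mul_diagonal]
  simp [hB]

end HyperbolicUmbilic

open HyperbolicUmbilic in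
theorem hyperbolic_umbilic_lensing_magnification_relation_general {K ι : Type*} [Field K]
    [Fintype ι] (hι : Fintype.card ι = 4) {c : K} {s : K × K} {p : ι → K × K} (hp : p.Injective)
    (hs : ∀ i, lensMap c (p i) = s) (hD : ∀ i, 4 * ((p i).1 * (p i).2 - c ^ 2) ≠ 0) :
    ∑ i, 1 / (4 * ((p i).1 * (p i).2 - c ^ 2)) = 0 := by
  classical
  simp only [← bezoutian_self] at hD ⊢
  -- The coefficient of `uv` in the interpolant of the constant `1`.
  have h := congrFun₂ (bezoutianCoeffs_mul_diagonal_mul_evalMatrix hι hp hs hD) 3 0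
  rw [mul_apply] at h
  simpa [mul_diagonal, bezoutianCoeffs, evalMatrix] using h

/-- Hyperbolic umbilic magnification relation: the total signed magnification of a source
in the four-image region of the hyperbolic umbilic lensing map
`η_c(u,v) = (u² + 2cv, v² + 2cu)` is identically zero. -/
theorem hyperbolic_umbilic_lensing_magnification_relation
    (c s₁ s₂ u₁ v₁ u₂ v₂ u₃ v₃ u₄ v₄ : ℝ)
    (h12 : (u₁, v₁) ≠ (u₂, v₂)) (h13 : (u₁, v₁) ≠ (u₃, v₃)) (h14 : (u₁, v₁) ≠ (u₄, v₄))
    (h23 : (u₂, v₂) ≠ (u₃, v₃)) (h24 : (u₂, v₂) ≠ (u₄, v₄)) (h34 : (u₃, v₃) ≠ (u₄, v₄))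
    (h₁a : u₁ ^ 2 + 2 * c * v₁ = s₁) (h₁b : v₁ ^ 2 + 2 * c * u₁ = s₂)
    (h₂a : u₂ ^ 2 + 2 * c * v₂ = s₁) (h₂b : v₂ ^ 2 + 2 * c * u₂ = s₂)
    (h₃a : u₃ ^ 2 + 2 * c * v₃ = s₁) (h₃b : v₃ ^ 2 + 2 * c * u₃ = s₂)
    (h₄a : u₄ ^ 2 + 2 * c * v₄ = s₁) (h₄b : v₄ ^ 2 + 2 * c * u₄ = s₂)
    (hD₁ : 4 * (u₁ * v₁ - c ^ 2) ≠ 0) (hD₂ : 4 * (u₂ * v₂ - c ^ 2) ≠ 0)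
    (hD₃ : 4 * (u₃ * v₃ - c ^ 2) ≠ 0) (hD₄ : 4 * (u₄ * v₄ - c ^ 2) ≠ 0) :
    1 / (4 * (u₁ * v₁ - c ^ 2)) + 1 / (4 * (u₂ * v₂ - c ^ 2)) +
      1 / (4 * (u₃ * v₃ - c ^ 2)) + 1 / (4 * (u₄ * v₄ - c ^ 2)) = 0 := by
  let p : Fin 4 → ℝ × ℝ := ![(u₁, v₁), (u₂, v₂), (u₃, v₃), (u₄, v₄)]
  have hp : p.Injective := List.nodup_ofFn.mp (by simp_all [p])
  have hs : ∀ i, HyperbolicUmbilic.lensMap c (p i) = (s₁, s₂) := by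
    simp_all [p, Fin.forall_fin_succ, HyperbolicUmbilic.lensMap]
  have hD : ∀ i, 4 * ((p i).1 * (p i).2 - c ^ 2) ≠ 0 := by
    simp_all [p, Fin.forall_fin_succ]
  simpa only [Fin.sum_univ_four, p, cons_val] using
    hyperbolic_umbilic_lensing_magnification_relation_general (Fintype.card_fin 4) hp hs hD
end

section
/- Let c, s₁, s₂ ∈ ℝ. Suppose (u₁,v₁), (u₂,v₂), (u₃,v₃), (u₄,v₄) are four pairwise distinct points of ℝ² each satisfying −3u_i² − cv_i = s₁ and −3v_i² − cu_i = s₂, and suppose D_i := 36u_iv_i − c² ≠ 0 for each i. Then 1/D₁ + 1/D₂ + 1/D₃ + 1/D₄ = 0; that is, the total signed magnification of a source in the four-image region of the generic hyperbolic umbilic map is identically zero. -/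
/-!
Translate one image `x` of a quadratic planar map to the origin. For two further images `x + y`
and `x + z`, the differential `M` at `x` satisfies `M y = -q y` and `M z = -q z`, where `q` is the
quadratic part, so `det M * (y ∧ z) = q y ∧ q z`. The right-hand side is divisible by `y ∧ z`, with
a quotient `B y z` that is bilinear and does not depend on `x` (the Bezoutian of the two components
of `q`). Nondegeneracy of `x` forces `y ∧ z ≠ 0`, hence `det M = B y z`: the images form an
orthocentric system for `B`, the Jacobian at an image being the product `B` of the edges to any
two others. Four points of the plane satisfy an affine relation `∑ wᵢ pᵢ = 0`, `∑ wᵢ = 0`, and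
pairing it with an edge `pⱼ - pₖ` shows that `wᵢ Dᵢ` is independent of `i`; so the reciprocals
`1 / Dᵢ` are proportional to the `wᵢ` and sum to zero.
-/

variable {R K : Type*} [CommRing R] [Field K]

section Orthocentric

variable {V ι : Type*} [AddCommGroup V] [Module R V] [Module K V] {p : ι → V}
  {B : LinearMap.BilinForm R V} {D : ι → R}

/-- The points `p i` form an orthocentric system with respect to `B`: seen from `p i`, any two
other points have product `D i`. As `D i` does not depend on them, `p l - p i` is orthogonal to
`p j - p k` for distinct indices, which for a triangle and a fourth point is the usual notion. -/
def IsOrthocentricSystem (B : LinearMap.BilinForm R V) (p : ι → V) (D : ι → R) : Prop :=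
  ∀ ⦃i j k⦄, i ≠ j → i ≠ k → j ≠ k → B (p j - p i) (p k - p i) = D i

namespace IsOrthocentricSystem

theorem apply_edge_self (h : IsOrthocentricSystem B p D) {i j k : ι}
    (hij : i ≠ j) (hik : i ≠ k) (hjk : j ≠ k) :
    B (p j - p k) (p j - p k) = D j + D k :=
  calc B (p j - p k) (p j - p k)
      = B (p k - p j) (p i - p j) + B (p j - p k) (p i - p k) := by
        simp only [map_sub, LinearMap.sub_apply]
        ring
    _ = D j + D k := by rw [h hjk hij.symm hik.symm, h hjk.symm hik.symm hij.symm]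

theorem weight_mul_eq [Fintype ι] (h : IsOrthocentricSystem B p D) (hι : 2 < Fintype.card ι)
    {w : ι → R} (hwp : ∑ i, w i • p i = 0) (hw : ∑ i, w i = 0) (j k : ι) :
    w j * D j = w k * D k := by
  classical
  obtain rfl | hjk := eq_or_ne j k
  · rfl
  obtain ⟨l, -, hl⟩ : ∃ l ∈ Finset.univ, l ∉ ({j, k} : Finset ι) :=
    Finset.exists_mem_notMem_of_card_lt_card (Finset.card_le_two.trans_lt hι)
  obtain ⟨hlj, hlk⟩ : l ≠ j ∧ l ≠ k := by simpa using hl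
  have edge (i : ι) : B (p i - p k) (p j - p k) =
      D k + (if i = j then D j else 0) - (if i = k then D k else 0) := by
    obtain rfl | hij := eq_or_ne i j
    · rw [h.apply_edge_self hlj hlk hjk, if_pos rfl, if_neg hjk, sub_zero, add_comm]
    obtain rfl | hik := eq_or_ne i k
    · simp [hjk.symm]
    rw [h hik.symm hjk.symm hij, if_neg hij, if_neg hik, add_zero, sub_zero]
  have centered : ∑ i, w i • (p i - p k) = 0 := by
    simp only [smul_sub, Finset.sum_sub_distrib, ← Finset.sum_smul, hwp, hw, zero_smul, sub_zero]
  have pairing : ∑ i, w i * B (p i - p k) (p j - p k) = 0 := by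
    simpa only [map_sum, map_smul, LinearMap.sum_apply, LinearMap.smul_apply, smul_eq_mul,
      map_zero, LinearMap.zero_apply] using congrArg (fun v => B v (p j - p k)) centered
  simp only [edge, mul_add, mul_sub, mul_ite, mul_zero, Finset.sum_add_distrib,
    Finset.sum_sub_distrib, ← Finset.sum_mul, hw, Finset.sum_ite_eq', Finset.mem_univ,
    if_true] at pairing
  linear_combination pairing

theorem sum_inv_eq_zero [Fintype ι] [FiniteDimensional K V] [Nontrivial V]
    {B : LinearMap.BilinForm K V} {D : ι → K} (h : IsOrthocentricSystem B p D)
    (hι : Module.finrank K V + 1 < Fintype.card ι) (hD : ∀ i, D i ≠ 0) : ∑ i, (D i)⁻¹ = 0 := by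
  have hV : 0 < Module.finrank K V := Module.finrank_pos
  have hdep : ¬ AffineIndependent K p := fun hp => by
    have := hp.card_le_finrank_succ
    have := (vectorSpan K (Set.range p)).finrank_le
    lia
  rw [affineIndependent_iff_of_fintype] at hdep
  push Not at hdep
  obtain ⟨w, hw, hwp, m, hm⟩ := hdep
  rw [Finset.weightedVSub_eq_linear_combination _ hw] at hwp
  have hinv (i : ι) : (D i)⁻¹ = (w m * D m)⁻¹ * w i := by
    rw [eq_inv_mul_iff_mul_eq₀ (mul_ne_zero hm (hD m)), h.weight_mul_eq (by lia) hwp hw m i,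
      mul_inv_cancel_right₀ (hD i)]
  simp only [hinv, ← Finset.mul_sum, hw, mul_zero]

end IsOrthocentricSystem

end Orthocentric

/-- The affine conic `a u² + b u v + c v² + d u + e v + f = 0`, given by its coefficients, which
may all vanish. -/
structure PlaneConic (R : Type*) where
  (a b c d e f : R)

/-- The area form `x ∧ y` of the plane. -/
def wedge (x y : R × R) : R := x.1 * y.2 - y.1 * x.2

theorem exists_eq_smul_of_wedge_eq_zero {x y : K × K} (hx : x ≠ 0) (h : wedge x y = 0) :
    ∃ t : K, y = t • x := by
  rw [wedge, sub_eq_zero] at h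
  by_cases hx₁ : x.1 = 0
  · have hx₂ : x.2 ≠ 0 := fun hx₂ => hx (Prod.ext hx₁ hx₂)
    have hy₁ : y.1 = 0 := by simpa [hx₁, hx₂] using h.symm
    exact ⟨y.2 / x.2, Prod.ext (by simp [hx₁, hy₁]) (div_mul_cancel₀ _ hx₂).symm⟩
  · refine ⟨y.1 / x.1, Prod.ext (div_mul_cancel₀ _ hx₁).symm ?_⟩
    rw [Prod.smul_snd, smul_eq_mul, div_mul_eq_mul_div, eq_div_iff hx₁, mul_comm, h]

theorem eq_zero_of_wedge_eq_zero {x : R × R} (h : ∀ y, wedge x y = 0) : x = 0 :=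
  Prod.ext (by simpa [wedge] using h (0, 1)) (by simpa [wedge] using h (1, 0))

namespace PlaneConic

variable {P Q : PlaneConic R} {x y z : R × R}

/-- The value at a point of the polynomial defining the conic. -/
def eval (P : PlaneConic R) (x : R × R) : R :=
  P.a * x.1 ^ 2 + P.b * x.1 * x.2 + P.c * x.2 ^ 2 + P.d * x.1 + P.e * x.2 + P.f

/-- The quadratic part of the polynomial defining the conic. -/
def leadingForm (P : PlaneConic R) (y : R × R) : R :=
  P.a * y.1 ^ 2 + P.b * y.1 * y.2 + P.c * y.2 ^ 2

/-- The differential at `x`, applied to `y`, of the polynomial defining the conic. -/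
def differential (P : PlaneConic R) (x y : R × R) : R :=
  (2 * P.a * x.1 + P.b * x.2 + P.d) * y.1 + (P.b * x.1 + 2 * P.c * x.2 + P.e) * y.2

/-- The Jacobian determinant at `x` of the planar map whose components define the two conics. -/
def jacobian (P Q : PlaneConic R) (x : R × R) : R :=
  P.differential x (1, 0) * Q.differential x (0, 1) -
    P.differential x (0, 1) * Q.differential x (1, 0)

/-- The Bezoutian of the leading forms of two conics, as a bilinear form on the plane. -/
def bezoutian (P Q : PlaneConic R) : LinearMap.BilinForm R (R × R) :=
  LinearMap.mk₂ R
    (fun y z => (P.a * Q.b - P.b * Q.a) * y.1 * z.1 +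
      (P.a * Q.c - P.c * Q.a) * (y.1 * z.2 + y.2 * z.1) +
      (P.b * Q.c - P.c * Q.b) * y.2 * z.2)
    (fun _ _ _ => by simp only [Prod.fst_add, Prod.snd_add]; ring)
    (fun _ _ _ => by simp only [Prod.smul_fst, Prod.smul_snd, smul_eq_mul]; ring)
    (fun _ _ _ => by simp only [Prod.fst_add, Prod.snd_add]; ring)
    (fun _ _ _ => by simp only [Prod.smul_fst, Prod.smul_snd, smul_eq_mul]; ring)

/-- The point `x` lies on both conics. -/
def IsCommonZero (P Q : PlaneConic R) (x : R × R) : Prop :=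
  P.eval x = 0 ∧ Q.eval x = 0

theorem leadingForm_wedge_leadingForm (P Q : PlaneConic R) (y z : R × R) :
    P.leadingForm y * Q.leadingForm z - P.leadingForm z * Q.leadingForm y =
      wedge y z * bezoutian P Q y z := by
  simp only [leadingForm, wedge, bezoutian, LinearMap.mk₂_apply]
  ring

theorem differential_wedge_differential (P Q : PlaneConic R) (x y z : R × R) :
    P.differential x y * Q.differential x z - P.differential x z * Q.differential x y =
      wedge y z * jacobian P Q x := by
  simp only [differential, wedge, jacobian]
  ring

theorem eval_add (P : PlaneConic R) (x y : R × R) :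
    P.eval (x + y) = P.eval x + P.differential x y + P.leadingForm y := by
  simp only [eval, differential, leadingForm, Prod.fst_add, Prod.snd_add]
  ring

theorem differential_smul (P : PlaneConic R) (x y : R × R) (t : R) :
    P.differential x (t • y) = t * P.differential x y := by
  simp only [differential, Prod.smul_fst, Prod.smul_snd, smul_eq_mul]
  ring

theorem leadingForm_smul (P : PlaneConic R) (y : R × R) (t : R) :
    P.leadingForm (t • y) = t ^ 2 * P.leadingForm y := by
  simp only [leadingForm, Prod.smul_fst, Prod.smul_snd, smul_eq_mul]
  ring

theorem differential_eq_neg_leadingForm (hx : P.eval x = 0) (hy : P.eval (x + y) = 0) :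
    P.differential x y = -P.leadingForm y := by
  linear_combination hy - hx - P.eval_add x y

theorem differential_eq_zero_of_collinear [NoZeroDivisors R] {t : R} (ht₀ : t ≠ 0)
    (ht₁ : t ≠ 1) (hx : P.eval x = 0) (hy : P.eval (x + y) = 0) (hty : P.eval (x + t • y) = 0) :
    P.differential x y = 0 := by
  have hdiff := differential_eq_neg_leadingForm hx hy
  have hsmul := differential_eq_neg_leadingForm hx hty
  rw [differential_smul, leadingForm_smul] at hsmul
  have : t * (t - 1) * P.differential x y = 0 := by linear_combination t ^ 2 * hdiff - hsmul
  simpa [ht₀, sub_eq_zero, ht₁] using this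

theorem jacobian_eq_zero_of_differential_eq_zero [NoZeroDivisors R] (hy : y ≠ 0)
    (hP : P.differential x y = 0) (hQ : Q.differential x y = 0) : jacobian P Q x = 0 := by
  by_contra hJ
  refine hy (eq_zero_of_wedge_eq_zero fun z => ?_)
  simpa [hP, hQ, hJ] using (differential_wedge_differential P Q x y z).symm

variable {P Q : PlaneConic K} {x y z : K × K}

theorem IsCommonZero.wedge_ne_zero (hx : IsCommonZero P Q x) (hxy : IsCommonZero P Q (x + y))
    (hxz : IsCommonZero P Q (x + z)) (hJ : jacobian P Q x ≠ 0)
    (hy : y ≠ 0) (hz : z ≠ 0) (hyz : y ≠ z) : wedge y z ≠ 0 := by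
  intro h
  obtain ⟨t, rfl⟩ := exists_eq_smul_of_wedge_eq_zero hy h
  have ht₀ : t ≠ 0 := by rintro rfl; exact hz (zero_smul K y)
  have ht₁ : t ≠ 1 := by rintro rfl; exact hyz (one_smul K y).symm
  exact hJ <| jacobian_eq_zero_of_differential_eq_zero hy
    (differential_eq_zero_of_collinear ht₀ ht₁ hx.1 hxy.1 hxz.1)
    (differential_eq_zero_of_collinear ht₀ ht₁ hx.2 hxy.2 hxz.2)

theorem IsCommonZero.bezoutian_eq_jacobian (hx : IsCommonZero P Q x)
    (hxy : IsCommonZero P Q (x + y)) (hxz : IsCommonZero P Q (x + z)) (hJ : jacobian P Q x ≠ 0)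
    (hy : y ≠ 0) (hz : z ≠ 0) (hyz : y ≠ z) : bezoutian P Q y z = jacobian P Q x := by
  apply mul_left_cancel₀ (hx.wedge_ne_zero hxy hxz hJ hy hz hyz)
  rw [← leadingForm_wedge_leadingForm, ← differential_wedge_differential,
    differential_eq_neg_leadingForm hx.1 hxy.1, differential_eq_neg_leadingForm hx.1 hxz.1,
    differential_eq_neg_leadingForm hx.2 hxy.2, differential_eq_neg_leadingForm hx.2 hxz.2]
  ring

theorem isOrthocentricSystem_bezoutian {ι : Type*} {p : ι → K × K} (hp : Function.Injective p)
    (hpz : ∀ i, IsCommonZero P Q (p i)) (hJ : ∀ i, jacobian P Q (p i) ≠ 0) :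
    IsOrthocentricSystem (bezoutian P Q) p fun i => jacobian P Q (p i) := by
  intro i j k hij hik hjk
  have edge (l : ι) : IsCommonZero P Q (p i + (p l - p i)) := by
    simpa only [add_sub_cancel] using hpz l
  exact (hpz i).bezoutian_eq_jacobian (edge j) (edge k) (hJ i)
    (sub_ne_zero.2 (hp.ne hij.symm)) (sub_ne_zero.2 (hp.ne hik.symm))
    (sub_left_injective.ne (hp.ne hjk))

theorem sum_inv_jacobian_eq_zero {p : Fin 4 → K × K} (hp : Function.Injective p)
    (hpz : ∀ i, IsCommonZero P Q (p i)) (hJ : ∀ i, jacobian P Q (p i) ≠ 0) :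
    ∑ i, (jacobian P Q (p i))⁻¹ = 0 :=
  (isOrthocentricSystem_bezoutian hp hpz hJ).sum_inv_eq_zero (by simp) hJ

end PlaneConic

section HyperbolicUmbilic

open PlaneConic

/-- The conic `-3u² - cv = s₁`, the first component of the lens equation `f_c(u, v) = (s₁, s₂)` of
the hyperbolic umbilic map. -/
def hyperbolicUmbilicFst (c s₁ : R) : PlaneConic R := ⟨-3, 0, 0, 0, -c, -s₁⟩

/-- The conic `-3v² - cu = s₂`, the second component of the lens equation
`f_c(u, v) = (s₁, s₂)` of the hyperbolic umbilic map. -/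
def hyperbolicUmbilicSnd (c s₂ : R) : PlaneConic R := ⟨0, 0, -3, -c, 0, -s₂⟩

theorem isCommonZero_hyperbolicUmbilic {c s₁ s₂ u v : R} (h₁ : -3 * u ^ 2 - c * v = s₁)
    (h₂ : -3 * v ^ 2 - c * u = s₂) :
    IsCommonZero (hyperbolicUmbilicFst c s₁) (hyperbolicUmbilicSnd c s₂) (u, v) := by
  constructor
  · simp only [eval, hyperbolicUmbilicFst]
    linear_combination h₁
  · simp only [eval, hyperbolicUmbilicSnd]
    linear_combination h₂

theorem jacobian_hyperbolicUmbilic (c s₁ s₂ u v : R) :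
    jacobian (hyperbolicUmbilicFst c s₁) (hyperbolicUmbilicSnd c s₂) (u, v) =
      36 * u * v - c ^ 2 := by
  simp only [jacobian, differential, hyperbolicUmbilicFst, hyperbolicUmbilicSnd]
  ring

end HyperbolicUmbilic

theorem hyperbolic_umbilic_generic_magnification_relation_general {K : Type*} [Field K]
    (c s₁ s₂ u₁ v₁ u₂ v₂ u₃ v₃ u₄ v₄ : K)
    (h12 : (u₁, v₁) ≠ (u₂, v₂)) (h13 : (u₁, v₁) ≠ (u₃, v₃)) (h14 : (u₁, v₁) ≠ (u₄, v₄))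
    (h23 : (u₂, v₂) ≠ (u₃, v₃)) (h24 : (u₂, v₂) ≠ (u₄, v₄)) (h34 : (u₃, v₃) ≠ (u₄, v₄))
    (h₁a : -3 * u₁ ^ 2 - c * v₁ = s₁) (h₁b : -3 * v₁ ^ 2 - c * u₁ = s₂)
    (h₂a : -3 * u₂ ^ 2 - c * v₂ = s₁) (h₂b : -3 * v₂ ^ 2 - c * u₂ = s₂)
    (h₃a : -3 * u₃ ^ 2 - c * v₃ = s₁) (h₃b : -3 * v₃ ^ 2 - c * u₃ = s₂)
    (h₄a : -3 * u₄ ^ 2 - c * v₄ = s₁) (h₄b : -3 * v₄ ^ 2 - c * u₄ = s₂)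
    (hD₁ : 36 * u₁ * v₁ - c ^ 2 ≠ 0) (hD₂ : 36 * u₂ * v₂ - c ^ 2 ≠ 0)
    (hD₃ : 36 * u₃ * v₃ - c ^ 2 ≠ 0) (hD₄ : 36 * u₄ * v₄ - c ^ 2 ≠ 0) :
    1 / (36 * u₁ * v₁ - c ^ 2) + 1 / (36 * u₂ * v₂ - c ^ 2) +
      1 / (36 * u₃ * v₃ - c ^ 2) + 1 / (36 * u₄ * v₄ - c ^ 2) = 0 := by
  let p : Fin 4 → K × K := ![(u₁, v₁), (u₂, v₂), (u₃, v₃), (u₄, v₄)]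
  have hp : Function.Injective p := by
    simp [p, Function.Injective, Fin.forall_fin_succ, *, Ne.symm]
  have hpz : ∀ i, PlaneConic.IsCommonZero
      (hyperbolicUmbilicFst c s₁) (hyperbolicUmbilicSnd c s₂) (p i) := by
    intro i
    fin_cases i
    exacts [isCommonZero_hyperbolicUmbilic h₁a h₁b, isCommonZero_hyperbolicUmbilic h₂a h₂b,
      isCommonZero_hyperbolicUmbilic h₃a h₃b, isCommonZero_hyperbolicUmbilic h₄a h₄b]
  have hJ : ∀ i, PlaneConic.jacobian
      (hyperbolicUmbilicFst c s₁) (hyperbolicUmbilicSnd c s₂) (p i) ≠ 0 := by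
    simp [p, Fin.forall_fin_succ, jacobian_hyperbolicUmbilic, *]
  simpa only [Fin.sum_univ_four, p, Matrix.cons_val, jacobian_hyperbolicUmbilic, one_div]
    using PlaneConic.sum_inv_jacobian_eq_zero hp hpz hJ

/-- Generic hyperbolic umbilic magnification relation: the total signed magnification of a
source in the four-image region of the generic hyperbolic umbilic map
`f_c(u,v) = (−3u² − cv, −3v² − cu)` is identically zero. -/
theorem hyperbolic_umbilic_generic_magnification_relation
    (c s₁ s₂ u₁ v₁ u₂ v₂ u₃ v₃ u₄ v₄ : ℝ)
    (h12 : (u₁, v₁) ≠ (u₂, v₂)) (h13 : (u₁, v₁) ≠ (u₃, v₃)) (h14 : (u₁, v₁) ≠ (u₄, v₄))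
    (h23 : (u₂, v₂) ≠ (u₃, v₃)) (h24 : (u₂, v₂) ≠ (u₄, v₄)) (h34 : (u₃, v₃) ≠ (u₄, v₄))
    (h₁a : -3 * u₁ ^ 2 - c * v₁ = s₁) (h₁b : -3 * v₁ ^ 2 - c * u₁ = s₂)
    (h₂a : -3 * u₂ ^ 2 - c * v₂ = s₁) (h₂b : -3 * v₂ ^ 2 - c * u₂ = s₂)
    (h₃a : -3 * u₃ ^ 2 - c * v₃ = s₁) (h₃b : -3 * v₃ ^ 2 - c * u₃ = s₂)
    (h₄a : -3 * u₄ ^ 2 - c * v₄ = s₁) (h₄b : -3 * v₄ ^ 2 - c * u₄ = s₂)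
    (hD₁ : 36 * u₁ * v₁ - c ^ 2 ≠ 0) (hD₂ : 36 * u₂ * v₂ - c ^ 2 ≠ 0)
    (hD₃ : 36 * u₃ * v₃ - c ^ 2 ≠ 0) (hD₄ : 36 * u₄ * v₄ - c ^ 2 ≠ 0) :
    1 / (36 * u₁ * v₁ - c ^ 2) + 1 / (36 * u₂ * v₂ - c ^ 2) +
      1 / (36 * u₃ * v₃ - c ^ 2) + 1 / (36 * u₄ * v₄ - c ^ 2) = 0 :=
  hyperbolic_umbilic_generic_magnification_relation_general c s₁ s₂ u₁ v₁ u₂ v₂ u₃ v₃ u₄ v₄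
    h12 h13 h14 h23 h24 h34 h₁a h₁b h₂a h₂b h₃a h₃b h₄a h₄b hD₁ hD₂ hD₃ hD₄
end

section
/- Let c, s₁, s₂ ∈ ℝ. Suppose (u₁,v₁), (u₂,v₂), (u₃,v₃), (u₄,v₄) are four pairwise distinct points of ℝ² each satisfying u_iv_i + cu_i² + u_i⁴ = s₁ and v_i = s₂, and suppose D_i := v_i + 2cu_i + 4u_i³ ≠ 0 for each i. Then 1/D₁ + 1/D₂ + 1/D₃ + 1/D₄ = 0; that is, the total signed magnification of a source in the four-image region of the generic swallowtail map is identically zero. -/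
/-!
With `v = s₂` fixed, the images are the four roots of the quartic `u⁴ + cu² + s₂u - s₁`, and the
Jacobian determinant at an image is the derivative of this quartic at the root. If `f` has `n`
distinct roots `xᵢ` and degree `n`, then `f'(xᵢ)` is, up to the leading coefficient of `f`, the
denominator `∏ (xᵢ - xⱼ)` of Lagrange interpolation. Hence, up to that same factor, `∑ 1 / f'(xᵢ)`
is the coefficient of degree `n - 1` in the interpolant of the constant `1`, which vanishes as soon
as `n ≥ 2`.
-/

open Polynomial Finset

section EulerJacobi

variable {ι : Type*} {s : Finset ι}

section IsDomain

variable {R : Type*} [CommRing R] [IsDomain R] {v : ι → R} {f : R[X]}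

theorem eq_C_leadingCoeff_mul_nodal_s7 (hv : Set.InjOn v s) (hf : f.degree = #s)
    (hroot : ∀ i ∈ s, f.eval (v i) = 0) :
    f = C f.leadingCoeff * Lagrange.nodal s v := by
  have hlc : f.leadingCoeff ≠ 0 := by
    rw [leadingCoeff_ne_zero]
    rintro rfl
    simp at hf
  refine eq_of_degree_le_of_eval_index_eq s hv hf.le ?_ ?_ fun i hi ↦ ?_
  · rw [degree_C_mul hlc, Lagrange.degree_nodal, hf]
  · rw [leadingCoeff_mul, leadingCoeff_C, Lagrange.nodal_monic.leadingCoeff, mul_one]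
  · rw [hroot i hi, eval_mul, Lagrange.eval_nodal_at_node hi, mul_zero]

theorem eval_derivative_eq_leadingCoeff_mul_prod [DecidableEq ι] (hv : Set.InjOn v s)
    (hf : f.degree = #s) (hroot : ∀ i ∈ s, f.eval (v i) = 0) {i : ι} (hi : i ∈ s) :
    f.derivative.eval (v i) = f.leadingCoeff * ∏ j ∈ s.erase i, (v i - v j) := by
  conv_lhs => rw [eq_C_leadingCoeff_mul_nodal_s7 hv hf hroot]
  rw [derivative_C_mul, eval_C_mul, Lagrange.eval_nodal_derivative_eval_node_eq hi,
    Lagrange.eval_nodal]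

end IsDomain

variable {K : Type*} [Field K] {v : ι → K} {f g : K[X]}

theorem sum_eval_div_eval_derivative_s7 (hv : Set.InjOn v s) (hf : f.degree = #s)
    (hroot : ∀ i ∈ s, f.eval (v i) = 0) (hg : g.degree < #s) :
    ∑ i ∈ s, g.eval (v i) / f.derivative.eval (v i) = g.coeff (#s - 1) / f.leadingCoeff := by
  classical
  rw [Lagrange.coeff_eq_sum hv hg, sum_div]
  refine sum_congr rfl fun i hi ↦ ?_
  rw [eval_derivative_eq_leadingCoeff_mul_prod hv hf hroot hi, mul_comm, div_div]

theorem sum_inv_eval_derivative_eq_zero (hv : Set.InjOn v s) (hf : f.degree = #s)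
    (hroot : ∀ i ∈ s, f.eval (v i) = 0) (hs : 2 ≤ #s) :
    ∑ i ∈ s, (f.derivative.eval (v i))⁻¹ = 0 := by
  have hdeg : (1 : K[X]).degree < #s := by
    rw [degree_one]
    exact_mod_cast (by lia : 0 < #s)
  have hcoeff : (1 : K[X]).coeff (#s - 1) = 0 := by
    rw [coeff_one, if_neg (by lia)]
  simpa [hcoeff] using sum_eval_div_eval_derivative_s7 hv hf hroot hdeg

end EulerJacobi

section Swallowtail

variable {R : Type*} [CommRing R]

/-- The generic swallowtail map `f_c(u, v) = (uv + cu² + u⁴, v)`, over an arbitrary commutative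
ring. -/
def swallowtailMap (c : R) (p : R × R) : R × R :=
  (p.1 * p.2 + c * p.1 ^ 2 + p.1 ^ 4, p.2)

/-- The Jacobian determinant of `swallowtailMap c`, given by its formula so that it makes sense
over any commutative ring; its reciprocal at a solution is the signed magnification. -/
def swallowtailJacobian (c : R) (p : R × R) : R :=
  p.2 + 2 * c * p.1 + 4 * p.1 ^ 3

/-- The quartic whose roots are the first coordinates of the points of the fibre of
`swallowtailMap c` over `s`. -/
noncomputable def swallowtailQuartic (c : R) (s : R × R) : R[X] :=
  X ^ 4 + C c * X ^ 2 + C s.2 * X - C s.1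

theorem degree_swallowtailQuartic [Nontrivial R] (c : R) (s : R × R) :
    (swallowtailQuartic c s).degree = 4 := by
  unfold swallowtailQuartic
  compute_degree!

theorem eval_swallowtailQuartic_swallowtailMap (c : R) (p : R × R) :
    (swallowtailQuartic c (swallowtailMap c p)).eval p.1 = 0 := by
  simp only [swallowtailQuartic, swallowtailMap, eval_sub, eval_add, eval_mul, eval_pow, eval_X,
    eval_C]
  ring

theorem eval_derivative_swallowtailQuartic_swallowtailMap (c : R) (p : R × R) :
    (swallowtailQuartic c (swallowtailMap c p)).derivative.eval p.1 = swallowtailJacobian c p := by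
  simp only [swallowtailQuartic, swallowtailMap, swallowtailJacobian, derivative_sub,
    derivative_add, derivative_C_mul, derivative_X_pow, derivative_X, derivative_C, eval_sub,
    eval_add, eval_mul, eval_pow, eval_X, eval_C, eval_one, eval_zero, Nat.cast_ofNat]
  ring

theorem injOn_fst_of_swallowtailMap_eq {c : R} {s : R × R} {S : Set (R × R)}
    (hS : ∀ p ∈ S, swallowtailMap c p = s) : Set.InjOn Prod.fst S := by
  intro p hp q hq hpq
  have hmap : swallowtailMap c p = swallowtailMap c q := (hS p hp).trans (hS q hq).symm
  exact Prod.ext hpq (Prod.ext_iff.mp hmap).2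

theorem swallowtail_generic_magnification_relation_general {K : Type*} [Field K] {c : K}
    {s : K × K} {S : Finset (K × K)} (hcard : #S = 4) (hS : ∀ p ∈ S, swallowtailMap c p = s) :
    ∑ p ∈ S, 1 / swallowtailJacobian c p = 0 := by
  have hdeg : (swallowtailQuartic c s).degree = #S := by
    rw [degree_swallowtailQuartic, hcard, Nat.cast_ofNat]
  have hroot : ∀ p ∈ S, (swallowtailQuartic c s).eval p.1 = 0 := fun p hp ↦
    hS p hp ▸ eval_swallowtailQuartic_swallowtailMap c p
  have hderiv : ∀ p ∈ S, (swallowtailQuartic c s).derivative.eval p.1 = swallowtailJacobian c p :=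
    fun p hp ↦ hS p hp ▸ eval_derivative_swallowtailQuartic_swallowtailMap c p
  calc ∑ p ∈ S, 1 / swallowtailJacobian c p
      = ∑ p ∈ S, ((swallowtailQuartic c s).derivative.eval p.1)⁻¹ :=
        sum_congr rfl fun p hp ↦ by rw [hderiv p hp, one_div]
    _ = 0 := sum_inv_eval_derivative_eq_zero (injOn_fst_of_swallowtailMap_eq hS) hdeg hroot
        (by lia)

end Swallowtail

/-- Generic swallowtail magnification relation: the total signed magnification of a
source in the four-image region of the generic swallowtail map
`f_c(u,v) = (uv + cu² + u⁴, v)` is identically zero. -/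
theorem swallowtail_generic_magnification_relation
    (c s₁ s₂ u₁ v₁ u₂ v₂ u₃ v₃ u₄ v₄ : ℝ)
    (h12 : (u₁, v₁) ≠ (u₂, v₂)) (h13 : (u₁, v₁) ≠ (u₃, v₃)) (h14 : (u₁, v₁) ≠ (u₄, v₄))
    (h23 : (u₂, v₂) ≠ (u₃, v₃)) (h24 : (u₂, v₂) ≠ (u₄, v₄)) (h34 : (u₃, v₃) ≠ (u₄, v₄))
    (h₁a : u₁ * v₁ + c * u₁ ^ 2 + u₁ ^ 4 = s₁) (h₁b : v₁ = s₂)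
    (h₂a : u₂ * v₂ + c * u₂ ^ 2 + u₂ ^ 4 = s₁) (h₂b : v₂ = s₂)
    (h₃a : u₃ * v₃ + c * u₃ ^ 2 + u₃ ^ 4 = s₁) (h₃b : v₃ = s₂)
    (h₄a : u₄ * v₄ + c * u₄ ^ 2 + u₄ ^ 4 = s₁) (h₄b : v₄ = s₂)
    (hD₁ : v₁ + 2 * c * u₁ + 4 * u₁ ^ 3 ≠ 0) (hD₂ : v₂ + 2 * c * u₂ + 4 * u₂ ^ 3 ≠ 0)
    (hD₃ : v₃ + 2 * c * u₃ + 4 * u₃ ^ 3 ≠ 0) (hD₄ : v₄ + 2 * c * u₄ + 4 * u₄ ^ 3 ≠ 0) :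
    1 / (v₁ + 2 * c * u₁ + 4 * u₁ ^ 3) + 1 / (v₂ + 2 * c * u₂ + 4 * u₂ ^ 3) +
      1 / (v₃ + 2 * c * u₃ + 4 * u₃ ^ 3) + 1 / (v₄ + 2 * c * u₄ + 4 * u₄ ^ 3) = 0 := by
  simpa [swallowtailJacobian, h12, h13, h14, h23, h24, h34, add_assoc] using
    swallowtail_generic_magnification_relation_general (c := c) (s := (s₁, s₂))
      (S := {(u₁, v₁), (u₂, v₂), (u₃, v₃), (u₄, v₄)}) (by grind) (by grind [swallowtailMap])
end

section
/- Let c, s₁ ∈ ℝ with c ≠ 0 and 0 < s₁ < 4c². Then the set of solutions (u,v) ∈ ℝ² of η_c(u,v) = (s₁, 0) is exactly the four points (√s₁, 0), (−√s₁, 0), (2c, √(4c² − s₁)), (2c, −√(4c² − s₁)), and the sum of the reciprocals of the Jacobian determinant 8cu − 4(u² + v²) over these four points is zero. -/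
/-!
The second component of the lens equation for a source `(s, 0)` factors as `2 v (2c - u) = 0`, so
every image lies on the axis `v = 0`, where `u² = s`, or on the line `u = 2c`, where
`v² = 4c² - s`. The Jacobian determinant is `4u(2c - u)` on the axis and `-4v²` on the line; hence
the axis pair has total magnification `1 / (2(4c² - s))`, which the pair on the line cancels.
-/

namespace EllipticUmbilic

section CommRing

variable {R : Type*} [CommRing R]

/-- The elliptic umbilic lensing map `η_c`, over an arbitrary commutative ring. -/
def lensMap (c : R) (p : R × R) : R × R :=
  (p.1 ^ 2 - p.2 ^ 2, -2 * p.1 * p.2 + 4 * c * p.2)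

/-- The Jacobian determinant of `η_c`, that is, the determinant of the matrix of formal partial
derivatives `!![2u, -2v; -2v, 4c - 2u]`, in expanded form. -/
def jacobian (c : R) (p : R × R) : R :=
  8 * c * p.1 - 4 * (p.1 ^ 2 + p.2 ^ 2)

theorem jacobian_axis (c u : R) : jacobian c (u, 0) = 4 * u * (2 * c - u) := by
  unfold jacobian
  ring

theorem jacobian_two_mul (c v : R) : jacobian c (2 * c, v) = -(4 * v ^ 2) := by
  unfold jacobian
  ring

variable [NoZeroDivisors R] [NeZero (2 : R)]

theorem lensMap_eq_axis_iff (c s u v : R) :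
    lensMap c (u, v) = (s, 0) ↔ v = 0 ∧ u ^ 2 = s ∨ u = 2 * c ∧ v ^ 2 = 4 * c ^ 2 - s := by
  have second_eq_zero_iff : -2 * u * v + 4 * c * v = 0 ↔ v = 0 ∨ u = 2 * c := by
    have factor : -2 * u * v + 4 * c * v = 2 * (v * (2 * c - u)) := by ring
    rw [factor, mul_eq_zero_iff_left two_ne_zero, mul_eq_zero, sub_eq_zero, eq_comm (a := u)]
  rw [lensMap, Prod.mk.injEq, second_eq_zero_iff, and_comm, or_and_right]
  refine or_congr (and_congr_right ?_) (and_congr_right ?_)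
  · rintro rfl
    rw [zero_pow two_ne_zero, sub_zero]
  · rintro rfl
    constructor <;> intro h <;> linear_combination -h

theorem setOf_lensMap_eq_axis {c s r w : R} (hr : r ^ 2 = s) (hw : w ^ 2 = 4 * c ^ 2 - s) :
    {p : R × R | lensMap c p = (s, 0)} = {(r, 0), (-r, 0), (2 * c, w), (2 * c, -w)} := by
  ext ⟨u, v⟩
  rw [Set.mem_ofPred_eq, lensMap_eq_axis_iff, ← hw, ← hr, sq_eq_sq_iff_eq_or_eq_neg,
    sq_eq_sq_iff_eq_or_eq_neg]
  simp only [Set.mem_insert_iff, Set.mem_singleton_iff, Prod.mk.injEq]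
  tauto

end CommRing

section Field

variable {K : Type*} [Field K]

/-- The signed magnification of an image `p` under `η_c`; it takes the junk value `0` at critical
points. -/
def magnification (c : K) (p : K × K) : K :=
  1 / jacobian c p

variable [NeZero (2 : K)]

theorem magnification_axis_add_neg {c r : K} (hr : r ≠ 0) (hc : 4 * c ^ 2 - r ^ 2 ≠ 0) :
    magnification c (r, 0) + magnification c (-r, 0) = 1 / (2 * (4 * c ^ 2 - r ^ 2)) := by
  have factor : 4 * c ^ 2 - r ^ 2 = (2 * c - r) * (2 * c + r) := by ring
  rw [factor] at hc ⊢
  have h_sub : 2 * c - r ≠ 0 := left_ne_zero_of_mul hc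
  have h_add : 2 * c + r ≠ 0 := right_ne_zero_of_mul hc
  have h_two : (2 : K) ≠ 0 := two_ne_zero
  have h_four : (4 : K) = 2 * 2 := by norm_num
  rw [magnification, magnification, jacobian_axis, jacobian_axis, sub_neg_eq_add, h_four]
  field_simp
  ring

theorem magnification_two_mul_add_neg (c w : K) :
    magnification c (2 * c, w) + magnification c (2 * c, -w) = -(1 / (2 * w ^ 2)) := by
  have h_two : (2 : K) ≠ 0 := two_ne_zero
  have h_four : (4 : K) = 2 * 2 := by norm_num
  rw [magnification, magnification, jacobian_two_mul, jacobian_two_mul, neg_sq, h_four]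
  field_simp
  ring

theorem sum_magnification_eq_zero {c r w : K} (hr : r ≠ 0) (hw : w ≠ 0)
    (hrw : w ^ 2 = 4 * c ^ 2 - r ^ 2) :
    magnification c (r, 0) + magnification c (-r, 0) +
      magnification c (2 * c, w) + magnification c (2 * c, -w) = 0 := by
  have hc : 4 * c ^ 2 - r ^ 2 ≠ 0 := hrw ▸ pow_ne_zero 2 hw
  rw [add_assoc, magnification_axis_add_neg hr hc, magnification_two_mul_add_neg, hrw,
    add_neg_cancel]

end Field

end EllipticUmbilic

open EllipticUmbilic in
theorem elliptic_umbilic_axis_images_general {K : Type*} [Field K] [NeZero (2 : K)] {c s r w : K}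
    (h_zero : s ≠ 0) (h_caustic : s ≠ 4 * c ^ 2) (hr : r ^ 2 = s) (hw : w ^ 2 = 4 * c ^ 2 - s) :
    {p : K × K | lensMap c p = (s, 0)} = {(r, 0), (-r, 0), (2 * c, w), (2 * c, -w)} ∧
      magnification c (r, 0) + magnification c (-r, 0) +
        magnification c (2 * c, w) + magnification c (2 * c, -w) = 0 := by
  refine ⟨setOf_lensMap_eq_axis hr hw, ?_⟩
  subst hr
  have hr0 : r ≠ 0 := (pow_ne_zero_iff two_ne_zero).1 h_zero
  have hw0 : w ≠ 0 := (pow_ne_zero_iff two_ne_zero).1 (hw ▸ sub_ne_zero.2 h_caustic.symm)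
  exact sum_magnification_eq_zero hr0 hw0 hw

/-- For a source `(s₁, 0)` with `0 < s₁ < 4c²` on the axis inside the caustic of the
elliptic umbilic lensing map `η_c(u,v) = (u² − v², −2uv + 4cv)`, the solution set of the
lens equation is exactly the four stated points, and the sum of the signed magnifications
(reciprocals of the Jacobian determinant `8cu − 4(u² + v²)`) over these points is zero. -/
theorem elliptic_umbilic_axis_images (c s₁ : ℝ) (hc : c ≠ 0)
    (h0 : 0 < s₁) (h4 : s₁ < 4 * c ^ 2) :
    ({p : ℝ × ℝ | p.1 ^ 2 - p.2 ^ 2 = s₁ ∧ -2 * p.1 * p.2 + 4 * c * p.2 = 0} =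
      {(Real.sqrt s₁, 0), (-Real.sqrt s₁, 0),
        (2 * c, Real.sqrt (4 * c ^ 2 - s₁)), (2 * c, -Real.sqrt (4 * c ^ 2 - s₁))}) ∧
    1 / (8 * c * Real.sqrt s₁ - 4 * ((Real.sqrt s₁) ^ 2 + (0 : ℝ) ^ 2)) +
      1 / (8 * c * (-Real.sqrt s₁) - 4 * ((-Real.sqrt s₁) ^ 2 + (0 : ℝ) ^ 2)) +
      1 / (8 * c * (2 * c) - 4 * ((2 * c) ^ 2 + (Real.sqrt (4 * c ^ 2 - s₁)) ^ 2)) +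
      1 / (8 * c * (2 * c) - 4 * ((2 * c) ^ 2 + (-Real.sqrt (4 * c ^ 2 - s₁)) ^ 2)) = 0 := by
  simpa only [EllipticUmbilic.lensMap, EllipticUmbilic.magnification, EllipticUmbilic.jacobian,
    Prod.mk.injEq] using elliptic_umbilic_axis_images_general h0.ne' h4.ne (Real.sq_sqrt h0.le)
      (Real.sq_sqrt (sub_nonneg.2 h4.le))
end

section
/- Let c, s₁, s₂ ∈ ℝ with s₂ ≠ 0, and let (u,v) ∈ ℝ². Then (u,v) satisfies u² − v² = s₁ and −2uv + 4cv = s₂ if and only if v ≠ 0, u = (−s₂ + 4cv)/(2v), and v is a root of the quartic v⁴ + (s₁ − 4c²)v² + 2cs₂·v − s₂²/4 = 0. In particular, the images of a source (s₁,s₂) with s₂ ≠ 0 under the elliptic umbilic lensing map correspond bijectively to the real roots of this quartic. -/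
/-!
When `-2 * u * v + 4 * c * v = s₂`, the quartic factors as `v ^ 2 * (s₁ - (u ^ 2 - v ^ 2))`.
If `s₂ ≠ 0`, neither an image nor a root can have `v = 0`, so this equation determines `u` from
`v`, and the vanishing of the quartic is then equivalent to the other lens equation.
-/

/-- The elliptic umbilic lensing map `η_c`, over an arbitrary commutative ring. The source is a
pair, so the images of `(s₁, s₂)` form the fibre `ellipticUmbilicMap c ⁻¹' {(s₁, s₂)}`. -/
def ellipticUmbilicMap {R : Type*} [CommRing R] (c : R) (p : R × R) : R × R :=
  (p.1 ^ 2 - p.2 ^ 2, -2 * p.1 * p.2 + 4 * c * p.2)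

/-- The quartic in `v` obtained by eliminating `u` from the lens equation
`ellipticUmbilicMap c (u, v) = (s₁, s₂)`, encoded as a polynomial function. Its constant
coefficient is the intended one only away from characteristic two, where `4 = 0`. -/
def ellipticUmbilicQuartic {K : Type*} [Field K] (c s₁ s₂ v : K) : K :=
  v ^ 4 + (s₁ - 4 * c ^ 2) * v ^ 2 + 2 * c * s₂ * v - s₂ ^ 2 / 4

theorem bijOn_snd_of_mem_iff {α β : Type*} {s : Set (α × β)} {t : Set β} (f : β → α)
    (h : ∀ a b, (a, b) ∈ s ↔ a = f b ∧ b ∈ t) : Set.BijOn Prod.snd s t := by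
  refine Set.InvOn.bijOn (f' := fun b ↦ (f b, b)) ⟨?_, fun _ _ ↦ rfl⟩ ?_ ?_
  · rintro ⟨a, b⟩ hab
    exact Prod.ext ((h a b).mp hab).1.symm rfl
  · rintro ⟨a, b⟩ hab
    exact ((h a b).mp hab).2
  · exact fun b hb ↦ (h (f b) b).mpr ⟨rfl, hb⟩

theorem ellipticUmbilicMap_eq_iff {R : Type*} [CommRing R] {c s₁ s₂ : R} {p : R × R} :
    ellipticUmbilicMap c p = (s₁, s₂) ↔
      p.1 ^ 2 - p.2 ^ 2 = s₁ ∧ -2 * p.1 * p.2 + 4 * c * p.2 = s₂ :=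
  Prod.mk_inj

theorem snd_ne_zero_of_ellipticUmbilicMap_eq {R : Type*} [CommRing R] {c s₁ s₂ u v : R}
    (hs₂ : s₂ ≠ 0) (h : ellipticUmbilicMap c (u, v) = (s₁, s₂)) : v ≠ 0 := by
  rintro rfl
  exact hs₂ (by simpa using (ellipticUmbilicMap_eq_iff.mp h).2.symm)

section Field

variable {K : Type*} [Field K] {c s₁ s₂ u v : K}

variable (c s₁ s₂ v) in
theorem ellipticUmbilicQuartic_eq_sub_half_sq :
    ellipticUmbilicQuartic c s₁ s₂ v =
      v ^ 4 + (s₁ - 4 * c ^ 2) * v ^ 2 + 2 * c * s₂ * v - (s₂ / 2) ^ 2 := by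
  rw [ellipticUmbilicQuartic, div_pow, show (2 : K) ^ 2 = 4 by norm_num]

variable [NeZero (2 : K)]

theorem neg_two_mul_mul_add_eq_iff_eq_div (hv : v ≠ 0) :
    -2 * u * v + 4 * c * v = s₂ ↔ u = (-s₂ + 4 * c * v) / (2 * v) := by
  rw [eq_div_iff (mul_ne_zero two_ne_zero hv)]
  constructor <;> intro h <;> linear_combination -h

variable (c s₁ u v) in
theorem ellipticUmbilicQuartic_neg_two_mul_mul_add :
    ellipticUmbilicQuartic c s₁ (-2 * u * v + 4 * c * v) v = v ^ 2 * (s₁ - (u ^ 2 - v ^ 2)) := by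
  have half_eq : (-2 * u * v + 4 * c * v) / 2 = (2 * c - u) * v := by
    rw [div_eq_iff two_ne_zero]
    ring
  rw [ellipticUmbilicQuartic_eq_sub_half_sq, half_eq]
  ring

theorem ne_zero_of_ellipticUmbilicQuartic_eq_zero (hs₂ : s₂ ≠ 0)
    (h : ellipticUmbilicQuartic c s₁ s₂ v = 0) : v ≠ 0 := by
  rintro rfl
  have half_sq_eq_zero : (s₂ / 2) ^ 2 = 0 := by
    rw [ellipticUmbilicQuartic_eq_sub_half_sq] at h
    linear_combination -h
  exact pow_ne_zero 2 (div_ne_zero hs₂ two_ne_zero) half_sq_eq_zero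

theorem ellipticUmbilicMap_eq_iff_ellipticUmbilicQuartic_eq_zero (hv : v ≠ 0) :
    ellipticUmbilicMap c (u, v) = (s₁, s₂) ↔
      u = (-s₂ + 4 * c * v) / (2 * v) ∧ ellipticUmbilicQuartic c s₁ s₂ v = 0 := by
  rw [ellipticUmbilicMap_eq_iff, and_comm, ← neg_two_mul_mul_add_eq_iff_eq_div hv]
  refine and_congr_right ?_
  rintro rfl
  rw [ellipticUmbilicQuartic_neg_two_mul_mul_add, mul_eq_zero_iff_left (pow_ne_zero 2 hv),
    sub_eq_zero, eq_comm]

theorem elliptic_umbilic_image_quartic_general (c s₁ : K) (hs₂ : s₂ ≠ 0) :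
    (∀ u v : K, ellipticUmbilicMap c (u, v) = (s₁, s₂) ↔
      v ≠ 0 ∧ u = (-s₂ + 4 * c * v) / (2 * v) ∧ ellipticUmbilicQuartic c s₁ s₂ v = 0) ∧
    Set.BijOn Prod.snd (ellipticUmbilicMap c ⁻¹' {(s₁, s₂)})
      {v | ellipticUmbilicQuartic c s₁ s₂ v = 0} := by
  have image_iff (u v : K) : ellipticUmbilicMap c (u, v) = (s₁, s₂) ↔
      v ≠ 0 ∧ u = (-s₂ + 4 * c * v) / (2 * v) ∧ ellipticUmbilicQuartic c s₁ s₂ v = 0 := by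
    rw [← and_iff_right_of_imp (snd_ne_zero_of_ellipticUmbilicMap_eq hs₂)]
    exact and_congr_right ellipticUmbilicMap_eq_iff_ellipticUmbilicQuartic_eq_zero
  refine ⟨image_iff, bijOn_snd_of_mem_iff (fun v ↦ (-s₂ + 4 * c * v) / (2 * v)) fun u v ↦ ?_⟩
  exact (image_iff u v).trans <|
    and_iff_right_of_imp fun h ↦ ne_zero_of_ellipticUmbilicQuartic_eq_zero hs₂ h.2

end Field

/-- Elimination of `u` in the elliptic umbilic lens equation: for `s₂ ≠ 0`, a point
`(u,v)` is an image of the source `(s₁,s₂)` under `η_c(u,v) = (u² − v², −2uv + 4cv)`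
iff `v ≠ 0`, `u = (−s₂ + 4cv)/(2v)`, and `v` is a root of the quartic
`v⁴ + (s₁ − 4c²)v² + 2cs₂·v − s₂²/4 = 0`.  In particular, the images correspond
bijectively (via `(u,v) ↦ v`) to the real roots of this quartic. -/
theorem elliptic_umbilic_image_quartic (c s₁ s₂ : ℝ) (hs₂ : s₂ ≠ 0) :
    (∀ u v : ℝ,
      (u ^ 2 - v ^ 2 = s₁ ∧ -2 * u * v + 4 * c * v = s₂) ↔
        (v ≠ 0 ∧ u = (-s₂ + 4 * c * v) / (2 * v) ∧
          v ^ 4 + (s₁ - 4 * c ^ 2) * v ^ 2 + 2 * c * s₂ * v - s₂ ^ 2 / 4 = 0)) ∧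
    Set.BijOn (fun p : ℝ × ℝ => p.2)
      {p : ℝ × ℝ | p.1 ^ 2 - p.2 ^ 2 = s₁ ∧ -2 * p.1 * p.2 + 4 * c * p.2 = s₂}
      {v : ℝ | v ^ 4 + (s₁ - 4 * c ^ 2) * v ^ 2 + 2 * c * s₂ * v - s₂ ^ 2 / 4 = 0} := by
  simpa only [Set.preimage, Set.mem_singleton_iff, ellipticUmbilicMap_eq_iff,
    ellipticUmbilicQuartic] using elliptic_umbilic_image_quartic_general c s₁ hs₂
end
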